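/- Let S = {s_1,…,s_K} (K ≥ 4) be a protocol sequence set in which all sequences have the same duty factor f = n/d with n, d positive integers, gcd(n, d) = 1 and 0 < f < 1. Suppose S is TI with MPR capability γ = 3 and R_i > 0 for every user i. If (i) K−3 is a prime number, (ii) K−2 is even, and (iii) gcd((K−2)/2, d) = 1, then S is SI. -/

import Mathlib

open Finset

/-- Generalized Hamming cross-correlation of the sequences indexed by `A`
(only the shifts `τ j` with `j ∈ A` matter). -/
def Hcorr {K L : ℕ} [NeZero L] (s : Fin K → ZMod L → ℕ)
    (A : Finset (Fin K)) (τ : Fin K → ZMod L) : ℕ :=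
  ∑ t : ZMod L, ∏ j ∈ A, s j (t + τ j)

/-- The family `s` is shift-invariant (SI): every generalized Hamming
cross-correlation is independent of the relative shifts. -/
def IsSI {K L : ℕ} [NeZero L] (s : Fin K → ZMod L → ℕ) : Prop :=
  ∀ A : Finset (Fin K), A.Nonempty →
    ∀ τ τ' : Fin K → ZMod L, Hcorr s A τ = Hcorr s A τ'

/-- Number of slots `t` in one period where user `i` transmits and at most
`γ - 1` other users transmit. -/
def Rcount {K L : ℕ} [NeZero L] (s : Fin K → ZMod L → ℕ) (γ : ℕ)
    (i : Fin K) (τ : Fin K → ZMod L) : ℕ :=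
  (Finset.univ.filter (fun t : ZMod L =>
    s i (t + τ i) = 1 ∧ ∑ j ∈ Finset.univ.erase i, s j (t + τ j) ≤ γ - 1)).card

/-- Throughput of user `i` under MPR capability `γ` at shifts `τ`. -/
def R {K L : ℕ} [NeZero L] (s : Fin K → ZMod L → ℕ) (γ : ℕ)
    (i : Fin K) (τ : Fin K → ZMod L) : ℚ :=
  (Rcount s γ i τ : ℚ) / L

/-- The family `s` is throughput-invariant (TI) with MPR capability `γ`. -/
def IsTI {K L : ℕ} [NeZero L] (s : Fin K → ZMod L → ℕ) (γ : ℕ) : Prop :=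
  ∀ i : Fin K, ∀ τ τ' : Fin K → ZMod L, R s γ i τ = R s γ i τ'

/-- Duty factor of a single sequence. -/
def duty {L : ℕ} [NeZero L] (s : ZMod L → ℕ) : ℚ :=
  (∑ t : ZMod L, (s t : ℚ)) / L

/-!
Let `f` be the common duty factor. For a bit `x` we have
`X ^ x = (x - f) (X - 1) + (1 - f + f X)`. Multiplying this over the users other than `i` and
summing the coefficients of degree below `γ` expands the throughput of `i` as a combination of the
correlations of the centred sequences `s j - f`, indexed by sets of users. As functions of the
shifts, these correlations are pairwise orthogonal, so constancy of the throughput kills each one,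
over a nonempty set, whose weight is nonzero for some `i`. Once they all vanish, expanding
`s j = (s j - f) + f` shows that `Hcorr` is constant.

For a set of `a + 2` users with `b + 1` users outside, the weights for `i` inside and outside the
set are, up to nonzero factors, the coefficients of degree `γ - 1` of `(1 - f + f X) P` and
`(X - 1) P`, where `P = (X - 1) ^ a (1 - f + f X) ^ b`. If both vanished, `P` would have two
consecutive zero coefficients, which its three-term recurrence propagates down to the constant
term `(-1) ^ a (1 - f) ^ b ≠ 0`. For the set of all users the weight is, up to sign, a coefficient
of a power of `X - 1`, and the correlations over single users vanish by centring.
-/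

section KrawtchoukPolynomials

open Polynomial

variable {𝕜 : Type*} [CommRing 𝕜]

/-- The polynomial `(X - 1) ^ a * (1 - f + f X) ^ b`. After rescaling `X` and dividing by the
constant term, it is the generating polynomial of the Krawtchouk polynomials for the binomial
distribution with parameters `a + b` and `f`, evaluated at `a`. -/
noncomputable def krawtchoukGen (f : 𝕜) (a b : ℕ) : 𝕜[X] :=
  (X - 1) ^ a * (C (1 - f) + C f * X) ^ b

lemma krawtchoukGen_succ_left (f : 𝕜) (a b : ℕ) :
    krawtchoukGen f (a + 1) b = (X - 1) * krawtchoukGen f a b := by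
  rw [krawtchoukGen, krawtchoukGen]
  ring

lemma krawtchoukGen_succ_right (f : 𝕜) (a b : ℕ) :
    krawtchoukGen f a (b + 1) = (C (1 - f) + C f * X) * krawtchoukGen f a b := by
  rw [krawtchoukGen, krawtchoukGen]
  ring

lemma coeff_zero_krawtchoukGen (f : 𝕜) (a b : ℕ) :
    (krawtchoukGen f a b).coeff 0 = (-1) ^ a * (1 - f) ^ b := by
  simp [krawtchoukGen, coeff_zero_eq_eval_zero]

lemma coeff_succ_krawtchoukGen_succ_left (f : 𝕜) (a b n : ℕ) :
    (krawtchoukGen f (a + 1) b).coeff (n + 1) =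
      (krawtchoukGen f a b).coeff n - (krawtchoukGen f a b).coeff (n + 1) := by
  rw [krawtchoukGen_succ_left, sub_mul, one_mul, coeff_sub, coeff_X_mul]

lemma coeff_succ_krawtchoukGen_succ_right (f : 𝕜) (a b n : ℕ) :
    (krawtchoukGen f a (b + 1)).coeff (n + 1) =
      (1 - f) * (krawtchoukGen f a b).coeff (n + 1) + f * (krawtchoukGen f a b).coeff n := by
  rw [krawtchoukGen_succ_right, add_mul, mul_assoc, coeff_add, coeff_C_mul, coeff_C_mul,
    coeff_X_mul]

lemma derivative_krawtchoukGen (f : 𝕜) (a b : ℕ) :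
    (X - 1) * (C (1 - f) + C f * X) * derivative (krawtchoukGen f a b) =
      (C (a : 𝕜) * (C (1 - f) + C f * X) + C (b * f) * (X - 1)) * krawtchoukGen f a b := by
  rw [krawtchoukGen, derivative_mul, derivative_pow, derivative_pow]
  rcases a with _ | a <;> rcases b with _ | b <;>
    simp only [derivative_sub, derivative_add, derivative_mul, derivative_X, derivative_one,
      derivative_C, C_sub, C_add, C_mul, C_0, C_1, Nat.cast_zero, Nat.cast_succ, pow_zero, pow_succ,
      Nat.add_sub_cancel] <;> ring

lemma coeff_krawtchoukGen_recurrence (f : 𝕜) (a b n : ℕ) :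
    f * (a + b - n) * (krawtchoukGen f a b).coeff n =
      ((1 - 2 * f) * (n + 1) - a * (1 - f) + b * f) * (krawtchoukGen f a b).coeff (n + 1) -
        (1 - f) * (n + 2) * (krawtchoukGen f a b).coeff (n + 2) := by
  set P := krawtchoukGen f a b with hP
  have expanded : C f * (X * (X * derivative P)) + C (1 - 2 * f) * (X * derivative P) -
      C (1 - f) * derivative P = C (a * (1 - f) - b * f) * P + C ((a + b) * f) * (X * P) := by
    have := derivative_krawtchoukGen f a b
    simp only [← hP, C_mul, C_sub, C_add, C_1, C_ofNat] at this ⊢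
    linear_combination this
  have coeff_X_mul_derivative : (X * derivative P).coeff n = n * P.coeff n := by
    cases n <;> simp [coeff_X_mul, coeff_derivative, mul_comm]
  have := congrArg (coeff · (n + 1)) expanded
  simp only [coeff_add, coeff_sub, coeff_C_mul, coeff_X_mul, coeff_X_mul_derivative,
    coeff_derivative] at this
  push_cast at this
  linear_combination -this

variable [IsDomain 𝕜]

lemma coeff_zero_krawtchoukGen_ne_zero {f : 𝕜} (hf : f ≠ 1) (a b : ℕ) :
    (krawtchoukGen f a b).coeff 0 ≠ 0 := by
  rw [coeff_zero_krawtchoukGen]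
  exact mul_ne_zero (pow_ne_zero _ (neg_ne_zero.2 one_ne_zero))
    (pow_ne_zero _ (sub_ne_zero.2 hf.symm))

variable [CharZero 𝕜]

lemma coeff_krawtchoukGen_zero_right_ne_zero (f : 𝕜) {a n : ℕ} (hn : n ≤ a) :
    (krawtchoukGen f a 0).coeff n ≠ 0 := by
  rw [krawtchoukGen, pow_zero, mul_one, sub_eq_add_neg, ← C_1, ← C_neg,
    coeff_X_add_C_pow]
  exact mul_ne_zero (pow_ne_zero _ (neg_ne_zero.2 one_ne_zero))
    (Nat.cast_ne_zero.2 (Nat.choose_pos hn).ne')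

lemma coeff_krawtchoukGen_ne_zero_or_succ_ne_zero {f : 𝕜} (hf₀ : f ≠ 0) (hf₁ : f ≠ 1)
    {a b n : ℕ} (hn : n ≤ a + b) :
    (krawtchoukGen f a b).coeff n ≠ 0 ∨ (krawtchoukGen f a b).coeff (n + 1) ≠ 0 := by
  induction n with
  | zero => exact .inl (coeff_zero_krawtchoukGen_ne_zero hf₁ a b)
  | succ n ih =>
    by_contra! ⟨h₁, h₂⟩
    have hcoeff : f * (a + b - n) ≠ 0 := by
      refine mul_ne_zero hf₀ (sub_ne_zero.2 ?_)
      exact_mod_cast (Nat.lt_of_succ_le hn).ne'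
    have h₀ : (krawtchoukGen f a b).coeff n = 0 := by
      simpa [h₁, h₂, hcoeff] using coeff_krawtchoukGen_recurrence f a b n
    exact (ih (Nat.le_of_succ_le hn)).elim (· h₀) (· h₁)

lemma coeff_krawtchoukGen_succ_right_ne_zero_or_succ_left_ne_zero {f : 𝕜} (hf₀ : f ≠ 0)
    (hf₁ : f ≠ 1) {a b n : ℕ} (hn : n ≤ a + b + 1) :
    (krawtchoukGen f a (b + 1)).coeff n ≠ 0 ∨ (krawtchoukGen f (a + 1) b).coeff n ≠ 0 := by
  cases n with
  | zero => exact .inl (coeff_zero_krawtchoukGen_ne_zero hf₁ a (b + 1))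
  | succ n =>
    by_contra! ⟨hright, hleft⟩
    rw [coeff_succ_krawtchoukGen_succ_right] at hright
    rw [coeff_succ_krawtchoukGen_succ_left] at hleft
    have h₀ : (krawtchoukGen f a b).coeff n = 0 := by
      linear_combination hright + (1 - f) * hleft
    have h₁ : (krawtchoukGen f a b).coeff (n + 1) = 0 := by
      linear_combination hright - f * hleft
    exact (coeff_krawtchoukGen_ne_zero_or_succ_ne_zero hf₀ hf₁ (Nat.le_of_succ_le_succ hn)).elim
      (· h₀) (· h₁)

end KrawtchoukPolynomials

section ThresholdIndicator

open Polynomial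

variable {𝕜 : Type*} [CommRing 𝕜]

/-- The sum of the coefficients of degree at most `m`; on a probability generating polynomial it
is the probability of being at most `m`. -/
noncomputable def lowCoeffSum (m : ℕ) : 𝕜[X] →ₗ[𝕜] 𝕜 :=
  ∑ k ∈ range (m + 1), lcoeff 𝕜 k

lemma lowCoeffSum_apply (m : ℕ) (p : 𝕜[X]) :
    lowCoeffSum m p = ∑ k ∈ range (m + 1), p.coeff k := by
  simp [lowCoeffSum]

lemma lowCoeffSum_X_pow (m n : ℕ) :
    lowCoeffSum m (X ^ n : 𝕜[X]) = if n ≤ m then 1 else 0 := by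
  simp [lowCoeffSum_apply, coeff_X_pow]

lemma lowCoeffSum_X_sub_one_mul (m : ℕ) (p : 𝕜[X]) :
    lowCoeffSum m ((X - 1) * p) = -p.coeff m := by
  rw [lowCoeffSum_apply]
  induction m with
  | zero => simp
  | succ m ih => rw [sum_range_succ, ih, sub_mul, one_mul, coeff_sub, coeff_X_mul]; ring

lemma X_pow_eq_of_bit (f : 𝕜) {x : ℕ} (hx : x = 0 ∨ x = 1) :
    (X ^ x : 𝕜[X]) = C (x - f) * (X - 1) + (C (1 - f) + C f * X) := by
  rcases hx with rfl | rfl <;>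
    simp only [Nat.cast_zero, Nat.cast_one, C_sub, C_0, C_1, pow_zero, pow_one] <;> ring

variable {ι : Type*} [DecidableEq ι]

lemma indicator_sum_le_eq_sum_powerset (f : 𝕜) (m : ℕ) (S : Finset ι) {x : ι → ℕ}
    (hx : ∀ j, x j = 0 ∨ x j = 1) :
    (if ∑ j ∈ S, x j ≤ m then (1 : 𝕜) else 0) =
      ∑ A ∈ S.powerset, lowCoeffSum m (krawtchoukGen f #A #(S \ A)) * ∏ j ∈ A, (x j - f) := by
  rw [← lowCoeffSum_X_pow, ← prod_pow_eq_pow_sum,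
    prod_congr rfl fun j _ => X_pow_eq_of_bit f (hx j), prod_add, map_sum]
  refine sum_congr rfl fun A _ => ?_
  rw [prod_mul_distrib, prod_const, prod_const, ← map_prod, mul_assoc, ← krawtchoukGen,
    ← smul_eq_C_mul, map_smul, smul_eq_mul, mul_comm]

variable [Fintype ι]

/-- The weight of the set `A` of users in the expansion of the throughput of user `i` along
centred correlations, for MPR capability `m + 1`. -/
noncomputable def throughputWeight (f : 𝕜) (m : ℕ) (i : ι) (A : Finset ι) : 𝕜 :=
  (if i ∈ A then 1 else f) * lowCoeffSum m (krawtchoukGen f #(A.erase i) #(Aᶜ.erase i))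

lemma mul_indicator_sum_erase_le_eq_sum (f : 𝕜) (m : ℕ) (i : ι) {x : ι → ℕ}
    (hx : ∀ j, x j = 0 ∨ x j = 1) :
    x i * (if ∑ j ∈ univ.erase i, x j ≤ m then (1 : 𝕜) else 0) =
      ∑ A, throughputWeight f m i A * ∏ j ∈ A, (x j - f) := by
  have univ_eq : (univ : Finset (Finset ι)) = (insert i (univ.erase i)).powerset := by
    rw [insert_erase (mem_univ i), powerset_univ]
  rw [indicator_sum_le_eq_sum_powerset f m _ hx, univ_eq,
    sum_powerset_insert (notMem_erase i _), mul_sum, ← sum_add_distrib]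
  refine sum_congr rfl fun A hA => ?_
  have hi : i ∉ A := fun h => notMem_erase i _ (mem_powerset.1 hA h)
  have others : univ.erase i \ A = Aᶜ.erase i := by
    ext j; simp [and_comm]
  have others_insert : (insert i A)ᶜ.erase i = Aᶜ.erase i := by
    ext j; simp +contextual
  simp only [throughputWeight, hi, mem_insert_self, if_true, if_false, erase_insert hi,
    erase_eq_of_notMem hi, others, others_insert, prod_insert hi]
  ring

lemma exists_throughputWeight_ne_zero [IsDomain 𝕜] [CharZero 𝕜] {f : 𝕜} (hf₀ : f ≠ 0)
    (hf₁ : f ≠ 1) {m : ℕ} (hm : m + 1 < Fintype.card ι) {A : Finset ι} (hA : 2 ≤ #A) :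
    ∃ i, throughputWeight f m i A ≠ 0 := by
  obtain ⟨a, ha⟩ := Nat.exists_eq_add_of_le' hA
  obtain ⟨i, hi⟩ : A.Nonempty := card_pos.1 (by omega)
  have hcard := A.card_add_card_compl
  have inside : throughputWeight f m i A = -(krawtchoukGen f a #Aᶜ).coeff m := by
    rw [throughputWeight, if_pos hi, one_mul, card_erase_of_mem hi, ha,
      erase_eq_of_notMem (by simpa using hi), ← lowCoeffSum_X_sub_one_mul,
      ← krawtchoukGen_succ_left]
    rfl
  rcases hb : #Aᶜ with _ | b
  · refine ⟨i, ?_⟩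
    rw [inside, hb]
    exact neg_ne_zero.2 (coeff_krawtchoukGen_zero_right_ne_zero f (by omega))
  · obtain ⟨k, hk⟩ : Aᶜ.Nonempty := card_pos.1 (by omega)
    have outside : throughputWeight f m k A = f * -(krawtchoukGen f (a + 1) b).coeff m := by
      rw [throughputWeight, if_neg (mem_compl.1 hk), erase_eq_of_notMem (mem_compl.1 hk),
        card_erase_of_mem hk, ha, hb, ← lowCoeffSum_X_sub_one_mul, ← krawtchoukGen_succ_left]
      rfl
    rw [hb] at inside
    obtain h | h := coeff_krawtchoukGen_succ_right_ne_zero_or_succ_left_ne_zero hf₀ hf₁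
      (show m ≤ a + b + 1 by omega)
    · exact ⟨i, inside ▸ neg_ne_zero.2 h⟩
    · exact ⟨k, outside ▸ mul_ne_zero hf₀ (neg_ne_zero.2 h)⟩

end ThresholdIndicator

section CrossCorrelation

variable {ι G 𝕜 : Type*} [Fintype G] [AddCommGroup G]

/-- The cross-correlation of the functions `g j` with `j ∈ A` at the shifts `τ`; the notion
behind `Hcorr`, for functions with values in any commutative semiring. -/
def crossCorr [CommSemiring 𝕜] (g : ι → G → 𝕜) (A : Finset ι) (τ : ι → G) : 𝕜 :=
  ∑ t, ∏ j ∈ A, g j (t + τ j)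

lemma crossCorr_singleton [CommSemiring 𝕜] (g : ι → G → 𝕜) (j : ι) (τ : ι → G) :
    crossCorr g {j} τ = ∑ t, g j t := by
  simp only [crossCorr, prod_singleton]
  exact Equiv.sum_comp (Equiv.addRight (τ j)) (g j)

lemma crossCorr_add_const [DecidableEq ι] [CommSemiring 𝕜] (g : ι → G → 𝕜) (c : 𝕜)
    (A : Finset ι) (τ : ι → G) :
    crossCorr (fun j t => g j t + c) A τ =
      ∑ B ∈ A.powerset, crossCorr g B τ * c ^ #(A \ B) := by
  simp only [crossCorr, prod_add, prod_const, sum_mul]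
  exact sum_comm

lemma crossCorr_add_single_of_notMem [DecidableEq ι] [CommSemiring 𝕜] (g : ι → G → 𝕜)
    {A : Finset ι} {j : ι} (hj : j ∉ A) (τ : ι → G) (x : G) :
    crossCorr g A (τ + Pi.single j x) = crossCorr g A τ := by
  refine sum_congr rfl fun t _ => prod_congr rfl fun k hk => ?_
  simp [ne_of_mem_of_not_mem hk hj]

lemma sum_crossCorr_add_single [DecidableEq ι] [CommSemiring 𝕜] {g : ι → G → 𝕜}
    {A : Finset ι} {j : ι} (hg : ∑ t, g j t = 0) (hj : j ∈ A) (τ : ι → G) :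
    ∑ x, crossCorr g A (τ + Pi.single j x) = 0 := by
  simp only [crossCorr]
  rw [sum_comm]
  refine sum_eq_zero fun t _ => ?_
  have split_off (x : G) : ∏ k ∈ A, g k (t + (τ + Pi.single j x : ι → G) k) =
      g j (t + τ j + x) * ∏ k ∈ A.erase j, g k (t + τ k) := by
    rw [← mul_prod_erase A _ hj]
    congr 1
    · simp [add_assoc]
    · exact prod_congr rfl fun k hk => by simp [ne_of_mem_erase hk]
  have shifted : ∑ x, g j (t + τ j + x) = 0 :=
    (Equiv.sum_comp (Equiv.addLeft (t + τ j)) (g j)).trans hg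
  simp only [split_off, ← sum_mul, shifted, zero_mul]

variable [Fintype ι]

lemma sum_mul_crossCorr_eq_zero [DecidableEq ι] [CommSemiring 𝕜] [IsAddTorsionFree 𝕜]
    {g : ι → G → 𝕜} {A : Finset ι} {j : ι} (hg : ∑ t, g j t = 0) (hj : j ∈ A) {Φ : (ι → G) → 𝕜}
    (hΦ : ∀ τ x, Φ (τ + Pi.single j x) = Φ τ) :
    ∑ τ, Φ τ * crossCorr g A τ = 0 := by
  have averaged : Fintype.card G • ∑ τ, Φ τ * crossCorr g A τ = 0 := calc
    _ = ∑ _x : G, ∑ τ, Φ τ * crossCorr g A τ := by rw [sum_const, card_univ]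
    _ = ∑ x, ∑ τ, Φ τ * crossCorr g A (τ + Pi.single j x) := by
      refine sum_congr rfl fun x _ => ?_
      rw [← Equiv.sum_comp (Equiv.addRight (Pi.single j x))]
      simp [hΦ]
    _ = ∑ τ, Φ τ * ∑ x, crossCorr g A (τ + Pi.single j x) := by
      rw [sum_comm]
      simp only [mul_sum]
    _ = 0 := by simp [sum_crossCorr_add_single hg hj]
  exact (nsmul_eq_zero_iff_right Fintype.card_ne_zero).1 averaged

lemma sum_crossCorr_mul_crossCorr_of_ne [DecidableEq ι] [CommSemiring 𝕜] [IsAddTorsionFree 𝕜]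
    {g : ι → G → 𝕜} (hg : ∀ j, ∑ t, g j t = 0) {A B : Finset ι} (hAB : A ≠ B) :
    ∑ τ, crossCorr g A τ * crossCorr g B τ = 0 := by
  by_cases hBA : B ⊆ A
  · obtain ⟨j, hjA, hjB⟩ := not_subset.1 fun h => hAB (h.antisymm hBA)
    simpa only [mul_comm] using
      sum_mul_crossCorr_eq_zero (hg j) hjA (crossCorr_add_single_of_notMem g hjB)
  · obtain ⟨j, hjB, hjA⟩ := not_subset.1 hBA
    exact sum_mul_crossCorr_eq_zero (hg j) hjB (crossCorr_add_single_of_notMem g hjA)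

lemma crossCorr_eq_zero_of_sum_eq_const [CommRing 𝕜] [LinearOrder 𝕜] [IsStrictOrderedRing 𝕜]
    {g : ι → G → 𝕜} (hg : ∀ j, ∑ t, g j t = 0) {w : Finset ι → 𝕜} {c : 𝕜}
    (hc : ∀ τ, ∑ A, w A * crossCorr g A τ = c) {B : Finset ι} (hB : B.Nonempty)
    (hw : w B ≠ 0) (τ : ι → G) : crossCorr g B τ = 0 := by
  classical
  obtain ⟨j, hj⟩ := hB
  have weighted_norm : w B * ∑ τ, crossCorr g B τ * crossCorr g B τ = 0 := calc
    _ = ∑ A, w A * ∑ τ, crossCorr g A τ * crossCorr g B τ := by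
      rw [Fintype.sum_eq_single B fun A hA => ?_]
      rw [sum_crossCorr_mul_crossCorr_of_ne hg hA, mul_zero]
    _ = ∑ τ, (∑ A, w A * crossCorr g A τ) * crossCorr g B τ := by
      simp only [mul_sum, sum_mul, mul_assoc]
      exact sum_comm
    _ = 0 := by
      simp only [hc]
      exact sum_mul_crossCorr_eq_zero (hg j) hj fun _ _ => rfl
  have norm_eq_zero := (mul_eq_zero.1 weighted_norm).resolve_left hw
  rw [sum_eq_zero_iff_of_nonneg fun _ _ => mul_self_nonneg _] at norm_eq_zero
  exact mul_self_eq_zero.1 (norm_eq_zero τ (mem_univ τ))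

end CrossCorrelation

section ProtocolSequences

/-- The sequences `s` lowered by the constant `f`, which have mean zero when `f` is their common
duty factor. -/
def centered {ι G : Type*} (s : ι → G → ℕ) (f : ℚ) (j : ι) (t : G) : ℚ :=
  s j t - f

variable {K L : ℕ} [NeZero L] {s : Fin K → ZMod L → ℕ} {f : ℚ}

lemma sum_centered_eq_zero {j : Fin K} (hduty : duty (s j) = f) :
    ∑ t, centered s f j t = 0 := by
  have hL : (L : ℚ) ≠ 0 := NeZero.ne _
  rw [duty, div_eq_iff hL] at hduty
  simp [centered, hduty, mul_comm]

lemma Rcount_eq_sum_throughputWeight (hbin : ∀ i t, s i t = 0 ∨ s i t = 1) (f : ℚ) (m : ℕ)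
    (i : Fin K) (τ : Fin K → ZMod L) :
    (Rcount s (m + 1) i τ : ℚ) =
      ∑ A, throughputWeight f m i A * crossCorr (centered s f) A τ := calc
  _ = ∑ t, s i (t + τ i) *
      (if ∑ j ∈ univ.erase i, s j (t + τ j) ≤ m then (1 : ℚ) else 0) := by
    rw [Rcount, card_filter]
    push_cast
    refine sum_congr rfl fun t _ => ?_
    rcases hbin i (t + τ i) with h | h <;> simp [h]
  _ = ∑ t, ∑ A, throughputWeight f m i A * ∏ j ∈ A, centered s f j (t + τ j) :=
    sum_congr rfl fun t _ => mul_indicator_sum_erase_le_eq_sum f m i fun j => hbin j (t + τ j)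
  _ = _ := by
    rw [sum_comm]
    simp only [crossCorr, mul_sum]

lemma cast_Hcorr_eq_sum_crossCorr_centered (s : Fin K → ZMod L → ℕ) (f : ℚ) (A : Finset (Fin K))
    (τ : Fin K → ZMod L) :
    (Hcorr s A τ : ℚ) = ∑ B ∈ A.powerset, crossCorr (centered s f) B τ * f ^ #(A \ B) := by
  rw [← crossCorr_add_const]
  simp [Hcorr, crossCorr, centered]

lemma isSI_of_crossCorr_centered_eq_zero
    (h : ∀ B : Finset (Fin K), B.Nonempty → ∀ τ, crossCorr (centered s f) B τ = 0) :
    IsSI s := by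
  have hcorr_eq (A : Finset (Fin K)) (τ) : (Hcorr s A τ : ℚ) = L * f ^ #A := by
    rw [cast_Hcorr_eq_sum_crossCorr_centered s f, sum_eq_single ∅]
    · simp [crossCorr]
    · intro B _ hB
      rw [h B (nonempty_iff_ne_empty.2 hB), zero_mul]
    · simp
  intro A _ τ τ'
  exact_mod_cast (hcorr_eq A τ).trans (hcorr_eq A τ').symm

lemma IsTI.Rcount_eq {γ : ℕ} (hTI : IsTI s γ) (i : Fin K) (τ τ' : Fin K → ZMod L) :
    Rcount s γ i τ = Rcount s γ i τ' := by
  have hL : (L : ℚ) ≠ 0 := NeZero.ne _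
  exact_mod_cast (div_left_inj' hL).1 (hTI i τ τ')

end ProtocolSequences

theorem stmt16_general {K L γ : ℕ} [NeZero L] (hγ : 1 ≤ γ) (hγK : γ < K)
    {s : Fin K → ZMod L → ℕ} (hbin : ∀ i t, s i t = 0 ∨ s i t = 1)
    {f : ℚ} (hf₀ : 0 < f) (hf₁ : f < 1) (hduty : ∀ i, duty (s i) = f) (hTI : IsTI s γ) :
    IsSI s := by
  obtain ⟨m, rfl⟩ := Nat.exists_eq_add_of_le' hγ
  have hmean (j) : ∑ t, centered s f j t = 0 := sum_centered_eq_zero (hduty j)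
  refine isSI_of_crossCorr_centered_eq_zero (f := f) fun B hB τ => ?_
  obtain hcard | hcard : #B = 1 ∨ 2 ≤ #B := eq_or_lt_of_le' hB.card_pos
  · obtain ⟨j, rfl⟩ := card_eq_one.1 hcard
    rw [crossCorr_singleton, hmean]
  · obtain ⟨i, hi⟩ :=
      exists_throughputWeight_ne_zero hf₀.ne' hf₁.ne (by simpa using hγK) hcard
    refine crossCorr_eq_zero_of_sum_eq_const hmean (c := Rcount s (m + 1) i 0) (fun τ => ?_) hB hi τ
    rw [← Rcount_eq_sum_throughputWeight hbin, hTI.Rcount_eq i τ 0]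

theorem stmt16 (K L : ℕ) (hK : 4 ≤ K) (hL : 1 ≤ L) [NeZero L]
    (s : Fin K → ZMod L → ℕ) (hbin : ∀ i t, s i t = 0 ∨ s i t = 1)
    (n d : ℕ) (hn : 0 < n) (hd : 0 < d) (hcop : Nat.Coprime n d)
    (hf0 : 0 < (n : ℚ) / (d : ℚ)) (hf1 : (n : ℚ) / (d : ℚ) < 1)
    (hduty : ∀ i, duty (s i) = (n : ℚ) / (d : ℚ))
    (hTI : IsTI s 3)
    (hR : ∀ (i : Fin K) (τ : Fin K → ZMod L), 0 < R s 3 i τ)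
    (hprime : Nat.Prime (K - 3)) (heven : Even (K - 2))
    (hgcd : Nat.gcd ((K - 2) / 2) d = 1) :
    IsSI s := by
  exact stmt16_general (by norm_num) hK hbin hf0 hf1 hduty hTI
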